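/- Let G be a graph on n vertices such that both G and its complement Ḡ are connected. Then pc_{1,2}(G) + pc_{1,2}(Ḡ) = n + 2 if and only if G or Ḡ is isomorphic to a double star T(n₁,n₂) for some n₁, n₂ ≥ 1. -/

import Mathlib

open SimpleGraph

/-- A walk is *distance `ℓ`-proper* with respect to an edge-coloring `c` if any two
edges whose positions along the walk differ by at most `ℓ` receive distinct colors
(equivalently, no two edges of the same color appear with fewer than `ℓ` edges in
between on the walk). -/
def SimpleGraph.Walk.IsDistProper {V : Type*} {G : SimpleGraph V} {u v : V}
    (ℓ : ℕ) (c : Sym2 V → ℕ) (p : G.Walk u v) : Prop :=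
  ∀ (i j : ℕ) (hi : i < p.edges.length) (hj : j < p.edges.length),
    i < j → j ≤ i + ℓ → c (p.edges[i]'hi) ≠ c (p.edges[j]'hj)

/-- `c` is a `(1,ℓ)`-proper-path coloring of `G` using at most `k` colors
(the colors of edges of `G` lie in `{0, …, k-1}`): every pair of distinct vertices
is joined by a distance `ℓ`-proper path. -/
def SimpleGraph.IsPCColoring {V : Type*} (G : SimpleGraph V) (ℓ k : ℕ)
    (c : Sym2 V → ℕ) : Prop :=
  (∀ e ∈ G.edgeSet, c e < k) ∧
  ∀ u v : V, u ≠ v → ∃ p : G.Walk u v, p.IsPath ∧ p.IsDistProper ℓ c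

/-- The `(1,ℓ)`-proper connection number `pc_{1,ℓ}(G)`: the minimum number of colors
in an edge-coloring of `G` such that every pair of distinct vertices is connected by
a distance `ℓ`-proper path. -/
noncomputable def SimpleGraph.pc {V : Type*} (G : SimpleGraph V) (ℓ : ℕ) : ℕ :=
  sInf {k | ∃ c : Sym2 V → ℕ, G.IsPCColoring ℓ k c}

/-- The double star `T(n₁, n₂)`: two adjacent centers, the first with `n₁` pendant
leaves and the second with `n₂` pendant leaves. -/
def doubleStar (n₁ n₂ : ℕ) : SimpleGraph (Fin 2 ⊕ (Fin n₁ ⊕ Fin n₂)) :=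
  SimpleGraph.fromRel (fun a b =>
    (a = Sum.inl 0 ∧ b = Sum.inl 1) ∨
    (a = Sum.inl 0 ∧ ∃ i : Fin n₁, b = Sum.inr (Sum.inl i)) ∨
    (a = Sum.inl 1 ∧ ∃ j : Fin n₂, b = Sum.inr (Sum.inr j)))


section part1
variable {V : Type*} {G : SimpleGraph V}

def PcRun (c : Sym2 V → ℕ) (s : ℕ) {u v : V} (p : G.Walk u v) : Prop :=
  ∀ (t : ℕ) (h : t < p.edges.length), c (p.edges[t]'h) = (s + t) % 3

theorem PcRun.proper {c : Sym2 V → ℕ} {s : ℕ} {u v : V} {p : G.Walk u v} (h : PcRun c s p) :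
    p.IsDistProper 2 c := by
  intro i j hi hj hij hj2
  rw [h i hi, h j hj]
  omega

theorem PcRun.cons {c : Sym2 V → ℕ} {s s' : ℕ} {u v w : V} {p : G.Walk v w} (h : PcRun c s p)
    (ha : G.Adj u v) (hc : c s(u, v) = s' % 3) (hs : (s' + 1) % 3 = s % 3) :
    PcRun c s' (SimpleGraph.Walk.cons ha p) := by
  intro t ht
  cases t with
  | zero => simpa using hc
  | succ t =>
    have := h t (by simpa using ht)
    simp only [SimpleGraph.Walk.edges_cons, List.getElem_cons_succ]
    rw [this]; omega

theorem PcRun.nil (c : Sym2 V → ℕ) (s : ℕ) (u : V) :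
    PcRun c s (SimpleGraph.Walk.nil : G.Walk u u) := by
  intro t ht; simp at ht

theorem distProper_reverse {c : Sym2 V → ℕ} {u v : V} {p : G.Walk u v}
    (h : p.IsDistProper 2 c) : p.reverse.IsDistProper 2 c := by
  intro i j hi hj hij hj2
  simp only [SimpleGraph.Walk.edges_reverse, List.length_reverse, List.getElem_reverse] at hi hj ⊢
  exact (h _ _ (by omega) (by omega) (by omega) (by omega)).symm

def PcGood (G : SimpleGraph V) (c : Sym2 V → ℕ) (S : Set V) (k : ℕ) : Prop :=
  (∀ e, c e < k) ∧ ∀ u ∈ S, ∀ v ∈ S, u ≠ v →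
    ∃ p : G.Walk u v, p.IsPath ∧ p.IsDistProper 2 c ∧ ∀ z ∈ p.support, z ∈ S

theorem closed_univ (hG : G.Connected) (S : Set V) (a : V) (ha : a ∈ S)
    (hS : ∀ x ∈ S, ∀ y, G.Adj x y → y ∈ S) : ∀ y, y ∈ S := by
  intro y
  obtain ⟨p⟩ := hG.preconnected a y
  induction p with
  | nil => exact ha
  | cons h p ih => exact ih (hS _ ha _ h)

theorem PcGood.grow {c : Sym2 V → ℕ} {S : Set V} {k : ℕ} (h : PcGood G c S k) {v s : V}
    (hv : v ∉ S) (hs : s ∈ S) (ha : G.Adj v s) :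
    ∃ c', PcGood G c' (insert v S) (k + 1) := by
  classical
  refine ⟨Function.update c s(v, s) k, ?_, ?_⟩
  · intro e
    by_cases he : e = s(v, s)
    · subst he; simp
    · rw [Function.update_of_ne he]; have := h.1 e; omega
  -- old paths are untouched
  have key : ∀ {a b : V} (p : G.Walk a b), (∀ z ∈ p.support, z ∈ S) →
      ∀ e ∈ p.edges, Function.update c s(v, s) k e = c e := by
    intro a b p hp e he
    rw [Function.update_of_ne]
    rintro rfl
    exact hv (hp _ (p.fst_mem_support_of_mem_edges he))
  have old : ∀ {a b : V} (p : G.Walk a b), (∀ z ∈ p.support, z ∈ S) → p.IsDistProper 2 c →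
      p.IsDistProper 2 (Function.update c s(v, s) k) := by
    intro a b p hp hd i j hi hj hij hj2
    rw [key p hp _ (List.getElem_mem hi), key p hp _ (List.getElem_mem hj)]
    exact hd i j hi hj hij hj2
  have new : ∀ b ∈ S, ∃ p : G.Walk v b, p.IsPath ∧
      p.IsDistProper 2 (Function.update c s(v, s) k) ∧ ∀ z ∈ p.support, z ∈ insert v S := by
    intro b hb
    have hex : ∃ p : G.Walk s b, p.IsPath ∧ p.IsDistProper 2 c ∧ ∀ z ∈ p.support, z ∈ S := by
      by_cases hsb : s = b
      · subst hsb
        refine ⟨.nil, by simp, ?_, by simpa using hs⟩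
        intro i j hi; simp at hi
      · exact h.2 s hs b hb hsb
    obtain ⟨p, hp, hd, hsup⟩ := hex
    refine ⟨.cons ha p, hp.cons (fun hh => hv (hsup _ hh)), ?_, ?_⟩
    · intro i j hi hj hij hj2
      have hd' := old p hsup hd
      cases j with
      | zero => omega
      | succ j =>
        cases i with
        | zero =>
          have hj' : j < p.edges.length := by simpa using hj
          change Function.update c s(v, s) k s(v, s) ≠ Function.update c s(v, s) k (p.edges[j]'hj')
          rw [key p hsup _ (List.getElem_mem _), Function.update_self]
          exact (h.1 _).ne'
        | succ i =>
          simp only [SimpleGraph.Walk.edges_cons, List.getElem_cons_succ]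
          exact hd' _ _ _ _ (by omega) (by omega)
    · intro z hz
      simp only [SimpleGraph.Walk.support_cons, List.mem_cons] at hz
      rcases hz with rfl | hz
      · exact Or.inl rfl
      · exact Or.inr (hsup z hz)
  rintro a (rfl | haS) b (rfl | hbS) hab
  · exact absurd rfl hab
  · exact new b hbS
  · obtain ⟨p, hp, hd, hsup⟩ := new a haS
    exact ⟨p.reverse, hp.reverse, distProper_reverse hd, by simpa using hsup⟩
  · obtain ⟨p, hp, hd, hsup⟩ := h.2 a haS b hbS hab
    exact ⟨p, hp, old p hsup hd, fun z hz => Or.inr (hsup z hz)⟩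

theorem PcGood.all [Fintype V] (hG : G.Connected) (m : ℕ) : ∀ (c : Sym2 V → ℕ) (S : Finset V)
    (k : ℕ), PcGood G c S k → S.Nonempty → S.card + m = Fintype.card V →
    ∃ c', G.IsPCColoring 2 (k + m) c' := by
  classical
  induction m with
  | zero =>
    intro c S k h _ hc
    have : S = Finset.univ := by rw [← Finset.card_eq_iff_eq_univ]; omega
    subst this
    refine ⟨c, fun e _ => h.1 e, fun u v huv => ?_⟩
    obtain ⟨p, hp, hd, _⟩ := h.2 u (by simp) v (by simp) huv
    exact ⟨p, hp, hd⟩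
  | succ m ih =>
    intro c S k h ⟨a, ha⟩ hc
    have : ∃ s ∈ S, ∃ v, v ∉ S ∧ G.Adj s v := by
      by_contra hcon
      push Not at hcon
      have := closed_univ hG (S : Set V) a ha (fun x hx y hxy => by
        by_contra hy; exact hcon x hx y hy hxy)
      have : S = Finset.univ := by ext y; simpa using this y
      rw [← Finset.card_eq_iff_eq_univ] at this; omega
    obtain ⟨s, hs, v, hv, hsv⟩ := this
    obtain ⟨c', hc'⟩ := h.grow (by simpa using hv) (by simpa using hs) hsv.symm
    have := ih c' (insert v S) (k + 1) (by simpa using hc') ⟨v, by simp⟩ (by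
      rw [Finset.card_insert_of_notMem hv]; omega)
    rwa [show k + (m + 1) = k + 1 + m by omega]

theorem seg {c : Sym2 V → ℕ} {x : ℕ → V} {n : ℕ} (hx : ∀ i j, i < n → j < n → x i = x j → i = j)
    (ha : ∀ i, i + 1 < n → G.Adj (x i) (x (i + 1)))
    (hc : ∀ i, i + 1 < n → c s(x i, x (i + 1)) = i % 3) {w : V} (d : ℕ) :
    ∀ i, i + d < n → ∀ q : G.Walk (x (i + d)) w, q.IsPath → PcRun c (i + d) q →
      (∀ k, k < i + d → x k ∉ q.support) →
      ∃ p : G.Walk (x i) w, p.IsPath ∧ PcRun c i p ∧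
        ∀ z ∈ p.support, z ∈ q.support ∨ ∃ k, i ≤ k ∧ k < n ∧ z = x k := by
  induction d with
  | zero =>
    intro i hi q hq hr _
    exact ⟨q, hq, hr, fun z hz => Or.inl hz⟩
  | succ d ih =>
    intro i hi q hq hr hk
    have e : i + (d + 1) = (i + 1) + d := by omega
    rw [e] at hi
    generalize i + (d + 1) = y at *
    subst e
    obtain ⟨p, hp, hpr, hps⟩ := ih (i + 1) hi q hq hr hk
    refine ⟨.cons (ha i (by omega)) p, hp.cons ?_, hpr.cons _ (hc i (by omega)) rfl, ?_⟩
    · intro hmem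
      rcases hps _ hmem with h | ⟨k, hk1, hk2, hk3⟩
      · exact hk i (by omega) h
      · have := hx i k (by omega) hk2 hk3; omega
    · intro z hz
      simp only [SimpleGraph.Walk.support_cons, List.mem_cons] at hz
      rcases hz with rfl | hz
      · exact Or.inr ⟨i, le_rfl, by omega, rfl⟩
      · rcases hps z hz with h | ⟨k, hk1, hk2, hk3⟩
        · exact Or.inl h
        · exact Or.inr ⟨k, by omega, hk2, hk3⟩

theorem base_good {x : ℕ → V} {n : ℕ} (hx : ∀ i j, i < n → j < n → x i = x j → i = j)
    (ha : ∀ i, i + 1 < n → G.Adj (x i) (x (i + 1))) (F : Set V)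
    (hF : ∀ v ∈ F, ∀ i, i < n → v ≠ x i) (lo hi : V → ℕ)
    (hlh : ∀ v ∈ F, lo v < hi v ∧ hi v < n ∧ G.Adj v (x (lo v)) ∧ G.Adj v (x (hi v))) :
    ∃ c, PcGood G c {z | z ∈ F ∨ ∃ i, i < n ∧ z = x i} 3 := by
  classical
  let Rel : Sym2 V → ℕ → Prop := fun e k =>
    (∃ i, i + 1 < n ∧ e = s(x i, x (i + 1)) ∧ k = i % 3) ∨
    (∃ v ∈ F, e = s(v, x (lo v)) ∧ k = (lo v + 2) % 3) ∨
    (∃ v ∈ F, e = s(v, x (hi v)) ∧ k = hi v % 3)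
  have hfun : ∀ e k k', Rel e k → Rel e k' → k = k' := by
    rintro e k k' (⟨i, hi1, rfl, rfl⟩ | ⟨v, hv, rfl, rfl⟩ | ⟨v, hv, rfl, rfl⟩)
      (⟨j, hj1, he, rfl⟩ | ⟨w, hw, he, rfl⟩ | ⟨w, hw, he, rfl⟩) <;>
      rw [Sym2.eq_iff] at he
    · rcases he with ⟨h1, h2⟩ | ⟨h1, h2⟩
      · rw [hx _ _ (by omega) (by omega) h1]
      · have := hx _ _ (by omega) (by omega) h1
        have := hx _ _ (by omega) (by omega) h2
        omega
    · have := hF w hw i (by omega); have := hF w hw (i+1) (by omega); grind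
    · have := hF w hw i (by omega); have := hF w hw (i+1) (by omega); grind
    · have := hF v hv j (by omega); have := hF v hv (j+1) (by omega); grind
    · have h1 := hlh v hv; have h2 := hlh w hw
      rcases he with ⟨h3, h4⟩ | ⟨h3, h4⟩
      · rw [hx _ _ (by omega) (by omega) h4]
      · exact absurd h3 (hF v hv _ (by omega))
    · have h1 := hlh v hv; have h2 := hlh w hw
      rcases he with ⟨h3, h4⟩ | ⟨h3, h4⟩
      · have := hx _ _ (by omega) (by omega) h4; subst h3; omega
      · exact absurd h3 (hF v hv _ (by omega))
    · have := hF v hv j (by omega); have := hF v hv (j+1) (by omega); grind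
    · have h1 := hlh v hv; have h2 := hlh w hw
      rcases he with ⟨h3, h4⟩ | ⟨h3, h4⟩
      · have := hx _ _ (by omega) (by omega) h4; subst h3; omega
      · exact absurd h3 (hF v hv _ (by omega))
    · have h1 := hlh v hv; have h2 := hlh w hw
      rcases he with ⟨h3, h4⟩ | ⟨h3, h4⟩
      · rw [hx _ _ (by omega) (by omega) h4]
      · exact absurd h3 (hF v hv _ (by omega))
  have hlt : ∀ e k, Rel e k → k < 3 := by
    rintro e k (⟨i, hi1, rfl, rfl⟩ | ⟨v, hv, rfl, rfl⟩ | ⟨v, hv, rfl, rfl⟩) <;> omega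
  let c : Sym2 V → ℕ := fun e => if h : ∃ k, Rel e k then h.choose else 0
  have hcR : ∀ e k, Rel e k → c e = k := by
    intro e k h
    have h' : ∃ k, Rel e k := ⟨k, h⟩
    simp only [c, dif_pos h']
    exact hfun e _ _ h'.choose_spec h
  have hc3 : ∀ e, c e < 3 := by
    intro e
    by_cases h : ∃ k, Rel e k
    · obtain ⟨k, hk⟩ := h
      rw [hcR e k hk]; exact hlt e k hk
    · simp only [c, dif_neg h]; omega
  have hc1 : ∀ i, i + 1 < n → c s(x i, x (i + 1)) = i % 3 :=
    fun i h => hcR _ _ (Or.inl ⟨i, h, rfl, rfl⟩)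
  have hc2 : ∀ v ∈ F, c s(v, x (lo v)) = (lo v + 2) % 3 :=
    fun v h => hcR _ _ (Or.inr (Or.inl ⟨v, h, rfl, rfl⟩))
  have hc4 : ∀ v ∈ F, c s(v, x (hi v)) = hi v % 3 :=
    fun v h => hcR _ _ (Or.inr (Or.inr ⟨v, h, rfl, rfl⟩))
  have hseg := fun {w : V} => @seg V G c x n hx ha hc1 w
  set S : Set V := {z | z ∈ F ∨ ∃ i, i < n ∧ z = x i} with hS
  -- from x i to x j
  have A1 : ∀ i j, i ≤ j → j < n → ∃ p : G.Walk (x i) (x j), p.IsPath ∧ PcRun c i p ∧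
      ∀ z ∈ p.support, ∃ k, i ≤ k ∧ k < n ∧ z = x k := by
    intro i j hij hj
    obtain ⟨d, rfl⟩ := Nat.exists_eq_add_of_le hij
    obtain ⟨p, h1, h2, h3⟩ := hseg d i hj .nil (by simp) (PcRun.nil _ _ _) (by
      intro k hk hmem
      simp at hmem
      have := hx _ _ (by omega) (by omega) hmem; omega)
    refine ⟨p, h1, h2, fun z hz => ?_⟩
    rcases h3 z hz with h | h
    · simp at h; exact ⟨i + d, by omega, hj, h⟩
    · exact h
  -- from x i to v
  have A2 : ∀ i, ∀ v ∈ F, i ≤ hi v → ∃ p : G.Walk (x i) v, p.IsPath ∧ PcRun c i p ∧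
      ∀ z ∈ p.support, z = v ∨ ∃ k, i ≤ k ∧ k < n ∧ z = x k := by
    intro i v hv hij
    have hl := hlh v hv
    obtain ⟨d, hd⟩ := Nat.exists_eq_add_of_le hij
    have hav : G.Adj (x (i + d)) v := by rw [← hd]; exact hl.2.2.2.symm
    obtain ⟨p, h1, h2, h3⟩ := hseg d i (by omega) (.cons hav .nil) (by
        simpa using hav.ne) ((PcRun.nil c (i + d + 1) v).cons hav (by
          rw [Sym2.eq_swap, ← hd]; exact hc4 v hv) rfl) (by
      intro k hk hmem
      simp at hmem
      rcases hmem with hmem | hmem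
      · have := hx _ _ (by omega) (by omega) hmem; omega
      · exact hF v hv k (by omega) hmem.symm)
    refine ⟨p, h1, h2, fun z hz => ?_⟩
    rcases h3 z hz with h | h
    · simp at h
      rcases h with h | h
      · exact Or.inr ⟨i + d, by omega, by omega, h⟩
      · exact Or.inl h
    · exact Or.inr h
  -- from w to x j
  have A3 : ∀ w ∈ F, ∀ j, lo w ≤ j → j < n → ∃ p : G.Walk w (x j), p.IsPath ∧
      p.IsDistProper 2 c ∧ ∀ z ∈ p.support, z ∈ S := by
    intro w hw j hj hjn
    have hl := hlh w hw
    obtain ⟨p, h1, h2, h3⟩ := A1 (lo w) j hj hjn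
    refine ⟨.cons hl.2.2.1 p, h1.cons ?_, (h2.cons hl.2.2.1 (hc2 w hw) (by omega)).proper, ?_⟩
    · intro hm
      obtain ⟨k, _, hk, he⟩ := h3 _ hm
      exact hF w hw k hk he
    · intro z hz
      simp only [SimpleGraph.Walk.support_cons, List.mem_cons] at hz
      rcases hz with rfl | hz
      · exact Or.inl hw
      · obtain ⟨k, _, hk, he⟩ := h3 _ hz
        exact Or.inr ⟨k, hk, he⟩
  have A4 : ∀ w ∈ F, ∀ v ∈ F, w ≠ v → lo w ≤ hi v → ∃ p : G.Walk w v, p.IsPath ∧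
      p.IsDistProper 2 c ∧ ∀ z ∈ p.support, z ∈ S := by
    intro w hw v hv hwv hj
    have hl := hlh w hw
    obtain ⟨p, h1, h2, h3⟩ := A2 (lo w) v hv hj
    refine ⟨.cons hl.2.2.1 p, h1.cons ?_, (h2.cons hl.2.2.1 (hc2 w hw) (by omega)).proper, ?_⟩
    · intro hm
      rcases h3 _ hm with he | ⟨k, _, hk, he⟩
      · exact hwv he
      · exact hF w hw k hk he
    · intro z hz
      simp only [SimpleGraph.Walk.support_cons, List.mem_cons] at hz
      rcases hz with rfl | hz
      · exact Or.inl hw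
      · rcases h3 _ hz with he | ⟨k, _, hk, he⟩
        · exact Or.inl (he ▸ hv)
        · exact Or.inr ⟨k, hk, he⟩
  have symm : ∀ {a b : V}, (∃ p : G.Walk a b, p.IsPath ∧
      p.IsDistProper 2 c ∧ ∀ z ∈ p.support, z ∈ S) → (∃ p : G.Walk b a, p.IsPath ∧
      p.IsDistProper 2 c ∧ ∀ z ∈ p.support, z ∈ S) := by
    rintro a b ⟨p, h1, h2, h3⟩
    exact ⟨p.reverse, h1.reverse, distProper_reverse h2, by simpa using h3⟩
  have A1' : ∀ i j, i ≤ j → j < n → ∃ p : G.Walk (x i) (x j), p.IsPath ∧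
      p.IsDistProper 2 c ∧ ∀ z ∈ p.support, z ∈ S := by
    intro i j hij hj
    obtain ⟨p, h1, h2, h3⟩ := A1 i j hij hj
    refine ⟨p, h1, h2.proper, fun z hz => ?_⟩
    obtain ⟨k, _, hk, he⟩ := h3 _ hz
    exact Or.inr ⟨k, hk, he⟩
  have A2' : ∀ i, ∀ v ∈ F, i ≤ hi v → ∃ p : G.Walk (x i) v, p.IsPath ∧
      p.IsDistProper 2 c ∧ ∀ z ∈ p.support, z ∈ S := by
    intro i v hv hij
    obtain ⟨p, h1, h2, h3⟩ := A2 i v hv hij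
    refine ⟨p, h1, h2.proper, fun z hz => ?_⟩
    rcases h3 _ hz with he | ⟨k, _, hk, he⟩
    · exact Or.inl (he ▸ hv)
    · exact Or.inr ⟨k, hk, he⟩
  have A5 : ∀ w ∈ F, ∀ j, j < n → ∃ p : G.Walk w (x j), p.IsPath ∧
      p.IsDistProper 2 c ∧ ∀ z ∈ p.support, z ∈ S := by
    intro w hw j hj
    have hl := hlh w hw
    rcases le_total (lo w) j with h | h
    · exact A3 w hw j h hj
    · exact symm (A2' j w hw (by omega))
  refine ⟨c, hc3, ?_⟩
  rintro u (hu | ⟨i, hi', rfl⟩) v (hv | ⟨j, hj, rfl⟩) huv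
  · have h1 := hlh u hu
    have h2 := hlh v hv
    rcases le_total (lo u) (hi v) with h | h
    · exact A4 u hu v hv huv h
    · exact symm (A4 v hv u hu huv.symm (by omega))
  · exact A5 u hu j hj
  · exact symm (A5 v hv i hi')
  · rcases le_total i j with h | h
    · exact A1' i j h hj
    · exact symm (A1' j i h hi')

theorem main_bound [Fintype V] (hG : G.Connected) (l : List V) (hl : l ≠ [])
    (hn : l.Nodup) (hch : l.IsChain G.Adj) (S : Finset V) (hlS : ∀ v ∈ l, v ∈ S)
    (hS : ∀ v ∈ S, v ∈ l ∨ ∃ a ∈ l, ∃ b ∈ l, a ≠ b ∧ G.Adj v a ∧ G.Adj v b) :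
    (∃ k c, G.IsPCColoring 2 k c ∧ k + S.card = Fintype.card V + 3) ∧
      G.pc 2 + S.card ≤ Fintype.card V + 3 := by
  classical
  obtain ⟨a0, ha0⟩ := List.exists_mem_of_ne_nil l hl
  have hfirst : ∃ k c, G.IsPCColoring 2 k c ∧ k + S.card = Fintype.card V + 3 := by
    let x : ℕ → V := fun i => l.getD i a0
    have hxi : ∀ i (h : i < l.length), x i = l[i] := fun i h => by simp [x, h]
    have hmem : ∀ v ∈ l, ∃ i, i < l.length ∧ v = x i := by
      intro v hv
      obtain ⟨i, hi, h⟩ := List.getElem_of_mem hv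
      exact ⟨i, hi, by rw [hxi i hi, h]⟩
    have h1 : ∀ v, ∃ i j, v ∈ S → v ∉ l →
        i < j ∧ j < l.length ∧ G.Adj v (x i) ∧ G.Adj v (x j) := by
      intro v
      by_cases h : v ∈ S ∧ v ∉ l
      · rcases hS v h.1 with h' | ⟨a, ha, b, hb, hab, hva, hvb⟩
        · exact absurd h' h.2
        · obtain ⟨i, hi, rfl⟩ := hmem a ha
          obtain ⟨j, hj, rfl⟩ := hmem b hb
          rcases lt_trichotomy i j with hij | hij | hij
          · exact ⟨i, j, fun _ _ => ⟨hij, hj, hva, hvb⟩⟩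
          · subst hij; exact absurd rfl hab
          · exact ⟨j, i, fun _ _ => ⟨hij, hi, hvb, hva⟩⟩
      · exact ⟨0, 0, fun h1 h2 => absurd ⟨h1, h2⟩ h⟩
    choose lo hi hlh using h1
    obtain ⟨c, hc⟩ := base_good (G := G) (x := x) (n := l.length)
      (fun i j hi hj h => by
        rw [hxi i hi, hxi j hj] at h
        exact (List.Nodup.getElem_inj_iff hn).1 h)
      (fun i hi => by
        rw [hxi i (by omega), hxi (i+1) hi]
        exact List.isChain_iff_getElem.1 hch i hi)
      {v | v ∈ S ∧ v ∉ l}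
      (fun v hv i hi h => hv.2 (by rw [h, hxi i hi]; exact List.getElem_mem hi)) lo hi
      (fun v hv => hlh v hv.1 hv.2)
    have hSe : {z | z ∈ {v | v ∈ S ∧ v ∉ l} ∨ ∃ i, i < l.length ∧ z = x i} = (S : Set V) := by
      ext z
      simp only [Set.mem_ofPred_eq, Finset.mem_coe]
      constructor
      · rintro (h | ⟨i, hi, rfl⟩)
        · exact h.1
        · exact hlS _ (by rw [hxi i hi]; exact List.getElem_mem hi)
      · intro h
        by_cases hz : z ∈ l
        · exact Or.inr (hmem z hz)
        · exact Or.inl ⟨h, hz⟩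
    rw [hSe] at hc
    have hle := S.card_le_univ
    obtain ⟨c', hc'⟩ := PcGood.all hG (Fintype.card V - S.card) c S 3 hc ⟨a0, hlS _ ha0⟩ (by omega)
    exact ⟨_, c', hc', by omega⟩
  refine ⟨hfirst, ?_⟩
  obtain ⟨k, c, hk, hkc⟩ := hfirst
  have : G.pc 2 ≤ k := Nat.sInf_le ⟨c, hk⟩
  omega

end part1

section part2
variable {V : Type*} {G : SimpleGraph V}

def GPath (G : SimpleGraph V) (l : List V) : Prop := l.Nodup ∧ l.IsChain G.Adj

def PFree (G : SimpleGraph V) (l : List V) (v : V) : Prop :=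
  v ∈ l ∨ ∃ a ∈ l, ∃ b ∈ l, a ≠ b ∧ G.Adj v a ∧ G.Adj v b

theorem bound_free [Fintype V] (hG : G.Connected) (l : List V) (hl : l ≠ [])
    (hp : GPath G l) (T : Finset V) (hT : ∀ v ∈ T, PFree G l v) :
    G.pc 2 + T.card ≤ Fintype.card V + 3 := by
  classical
  have := (main_bound hG l hl hp.1 hp.2 (T ∪ l.toFinset) (by simp +contextual) (by
    intro v hv
    rcases Finset.mem_union.1 hv with h | h
    · exact hT v h
    · exact Or.inl (by simpa using h))).2
  have h2 : T.card ≤ (T ∪ l.toFinset).card := Finset.card_le_card Finset.subset_union_left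
  omega

theorem pick_mem {l : List V} (hn : l.Nodup) (T : Finset V) (h : T.card < l.length) :
    ∃ a ∈ l, a ∉ T := by
  classical
  rw [← List.toFinset_card_of_nodup hn] at h
  obtain ⟨a, ha, hb⟩ := Finset.exists_mem_notMem_of_card_lt_card h
  exact ⟨a, by simpa using ha, hb⟩

theorem exists_longest [Fintype V] (G : SimpleGraph V) (l0 : List V) (h0 : GPath G l0) :
    ∃ l, GPath G l ∧ l0.length ≤ l.length ∧ ∀ l', GPath G l' → l'.length ≤ l.length := by
  by_contra hcon
  push Not at hcon
  have : ∀ m, ∃ l, GPath G l ∧ l0.length ≤ l.length ∧ m ≤ l.length := by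
    intro m
    induction m with
    | zero => exact ⟨l0, h0, le_rfl, Nat.zero_le _⟩
    | succ m ih =>
      obtain ⟨l, h1, h2, h3⟩ := ih
      obtain ⟨l', h4, h5⟩ := hcon l h1 h2
      exact ⟨l', h4, by omega, by omega⟩
  obtain ⟨l, h1, _, h2⟩ := this (Fintype.card V + 1)
  have := List.Nodup.length_le_card h1.1
  omega

theorem GPath.reverse {l : List V} (h : GPath G l) : GPath G l.reverse :=
  ⟨List.nodup_reverse.2 h.1, by
    rw [List.isChain_reverse]
    exact h.2.imp (fun _ _ hab => hab.symm)⟩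

theorem compl_adj_of {a b : V} (h : a ≠ b) (h' : ¬ G.Adj a b) : Gᶜ.Adj a b := by
  rw [SimpleGraph.compl_adj]; exact ⟨h, h'⟩

/-- the situation with at least two bad vertices -/
theorem case_two [Fintype V] (hGc : Gᶜ.Connected) (l : List V)
    (hp : GPath G l) (hlen : 5 ≤ l.length) (x1 xp : V) (h1 : x1 ∈ l) (h2 : xp ∈ l) (h12 : x1 ≠ xp)
    (hx1 : ∀ z, z ∉ l → Gᶜ.Adj z x1) (hxp : ∀ z, z ∉ l → Gᶜ.Adj z xp)
    (D : Finset V) (hD : ∀ y ∈ D, y ∉ l) (mm : V → V) (hml : ∀ y ∈ D, mm y ∈ l)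
    (hmm : ∀ y ∈ D, ∀ a ∈ l, a ≠ mm y → Gᶜ.Adj y a) (hcard : 2 ≤ D.card) :
    Gᶜ.pc 2 + (D.card + 5) ≤ Fintype.card V + 3 := by
  classical
  have hT : (D ∪ l.toFinset).card = D.card + l.length := by
    rw [Finset.card_union_of_disjoint, List.toFinset_card_of_nodup hp.1]
    rw [Finset.disjoint_left]
    intro a ha hb
    exact hD a ha (by simpa using hb)
  have main : ∀ B : List V, B ≠ [] → GPath Gᶜ B → (∀ y ∈ D, PFree Gᶜ B y) →
      (∀ a ∈ l, PFree Gᶜ B a) → Gᶜ.pc 2 + (D.card + 5) ≤ Fintype.card V + 3 := by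
    intro B hB hBp hBD hBl
    have := bound_free hGc B hB hBp (D ∪ l.toFinset) (by
      intro v hv
      rcases Finset.mem_union.1 hv with h | h
      · exact hBD v h
      · exact hBl v (by simpa using h))
    omega
  by_cases hdiff : ∃ y1 ∈ D, ∃ y2 ∈ D, mm y1 ≠ mm y2
  · obtain ⟨y1, hy1, y2, hy2, hne⟩ := hdiff
    obtain ⟨a, ha, haT⟩ := pick_mem hp.1 {mm y1, mm y2} (by
      have : Finset.card {mm y1, mm y2} ≤ 2 := Finset.card_le_two
      omega)
    simp only [Finset.mem_insert, Finset.mem_singleton, not_or] at haT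
    have m1 := hml y1 hy1
    have m2 := hml y2 hy2
    have n1 := hD y1 hy1
    have n2 := hD y2 hy2
    have e1 := hmm y1 hy1 _ m2 hne.symm
    have e2 := hmm y1 hy1 a ha haT.1
    have e3 := hmm y2 hy2 a ha haT.2
    have e4 := hmm y2 hy2 _ m1 hne
    apply main [mm y2, y1, a, y2, mm y1] (by simp)
    · refine ⟨?_, ?_⟩
      · simp only [List.nodup_cons, List.mem_cons, List.not_mem_nil, or_false, not_or,
          not_false_eq_true, List.nodup_nil, and_true]
        grind
      · simp only [List.isChain_cons_cons, List.isChain_singleton, and_true]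
        exact ⟨e1.symm, e2, e3.symm, e4⟩
    · intro y hy
      have := hmm y hy
      right
      by_cases hya : mm y = a
      · exact ⟨mm y1, by simp, mm y2, by simp, hne, this _ m1 (by grind), this _ m2 (by grind)⟩
      · by_cases hyb : mm y = mm y1
        · exact ⟨a, by simp, mm y2, by simp, by grind, this _ ha (by grind), this _ m2 (by grind)⟩
        · exact ⟨a, by simp, mm y1, by simp, by grind, this _ ha (by grind), this _ m1 (by grind)⟩
    · intro x hx
      by_cases hxa : x = mm y1
      · left; simp [hxa]
      by_cases hxb : x = mm y2
      · left; simp [hxb]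
      right
      exact ⟨y1, by simp, y2, by simp, by grind, (hmm y1 hy1 x hx hxa).symm,
        (hmm y2 hy2 x hx hxb).symm⟩
  · push Not at hdiff
    obtain ⟨y1, hy1, y2, hy2, hne⟩ := Finset.one_lt_card.1 hcard
    obtain ⟨m, hm⟩ : ∃ m, m = mm y1 := ⟨_, rfl⟩
    have hall : ∀ y ∈ D, ∀ a ∈ l, a ≠ m → Gᶜ.Adj y a := by
      intro y hy a ha ham
      exact hmm y hy a ha (by rw [hdiff y hy y1 hy1, ← hm]; exact ham)
    have hmin : m ∈ l := hm ▸ hml y1 hy1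
    have n1 := hD y1 hy1
    have n2 := hD y2 hy2
    have fin : ∀ B : List V, GPath Gᶜ B → m ∈ B → (∃ a ∈ l, ∃ b ∈ l, a ≠ m ∧ b ≠ m ∧ a ≠ b ∧
        a ∈ B ∧ b ∈ B) → (∃ y ∈ D, ∃ y' ∈ D, y ≠ y' ∧ y ∈ B ∧ y' ∈ B) →
        Gᶜ.pc 2 + (D.card + 5) ≤ Fintype.card V + 3 := by
      rintro B hB hmB ⟨a, ha, b, hb, ham, hbm, hab, haB, hbB⟩ ⟨y, hy, y', hy', hyy, hyB, hyB'⟩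
      apply main B (List.ne_nil_of_mem hmB) hB
      · intro z hz
        exact Or.inr ⟨a, haB, b, hbB, hab, hall z hz a ha ham, hall z hz b hb hbm⟩
      · intro x hx
        by_cases hxm : x = m
        · exact Or.inl (hxm ▸ hmB)
        · exact Or.inr ⟨y, hyB, y', hyB', hyy, (hall y hy x hx hxm).symm,
            (hall y' hy' x hx hxm).symm⟩
    by_cases hw : ∃ w ∈ D, Gᶜ.Adj m w
    · obtain ⟨w, hwD, hmw⟩ := hw
      obtain ⟨y, hy, hyw⟩ : ∃ y ∈ D, y ≠ w := by
        by_cases h : y1 = w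
        · exact ⟨y2, hy2, by grind⟩
        · exact ⟨y1, hy1, h⟩
      obtain ⟨a, ha, haT⟩ := pick_mem hp.1 {m} (by simp; omega)
      obtain ⟨b, hb, hbT⟩ := pick_mem hp.1 {m, a} (by
        have : Finset.card {m, a} ≤ 2 := Finset.card_le_two
        omega)
      simp only [Finset.mem_insert, Finset.mem_singleton, not_or] at haT hbT
      have nw := hD w hwD
      have ny := hD y hy
      apply fin [m, w, a, y, b]
      · refine ⟨?_, ?_⟩
        · simp only [List.nodup_cons, List.mem_cons, List.not_mem_nil, or_false, not_or,
            not_false_eq_true, List.nodup_nil, and_true]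
          grind
        · simp only [List.isChain_cons_cons, List.isChain_singleton, and_true]
          exact ⟨hmw, hall w hwD a ha haT, (hall y hy a ha haT).symm, hall y hy b hb hbT.1⟩
      · simp
      · exact ⟨a, ha, b, hb, haT, hbT.1, by grind, by simp, by simp⟩
      · exact ⟨w, hwD, y, hy, hyw.symm, by simp, by simp⟩
    · push Not at hw
      have hm1 : x1 ≠ m := by
        rintro rfl; exact hw y1 hy1 (hx1 y1 n1).symm
      have hmp : xp ≠ m := by
        rintro rfl; exact hw y1 hy1 (hxp y1 n1).symm
      obtain ⟨w, hmw⟩ : ∃ w, Gᶜ.Adj m w := by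
        by_contra hcon
        push Not at hcon
        have := closed_univ hGc {m} m rfl (by
          rintro x rfl y hxy; exact absurd hxy (hcon y)) x1
        exact hm1 this
      by_cases hwl : w ∈ l
      · have hwm : w ≠ m := hmw.ne'
        obtain ⟨a, ha, haT⟩ := pick_mem hp.1 {m, w} (by
          have : Finset.card {m, w} ≤ 2 := Finset.card_le_two
          omega)
        simp only [Finset.mem_insert, Finset.mem_singleton, not_or] at haT
        apply fin [m, w, y1, a, y2]
        · refine ⟨?_, ?_⟩
          · simp only [List.nodup_cons, List.mem_cons, List.not_mem_nil, or_false, not_or,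
              not_false_eq_true, List.nodup_nil, and_true]
            grind
          · simp only [List.isChain_cons_cons, List.isChain_singleton, and_true]
            exact ⟨hmw, (hall y1 hy1 w hwl hwm).symm, (hall y1 hy1 a ha haT.1),
              (hall y2 hy2 a ha haT.1).symm⟩
        · simp
        · exact ⟨w, hwl, a, ha, hwm, haT.1, by grind, by simp, by simp⟩
        · exact ⟨y1, hy1, y2, hy2, hne, by simp, by simp⟩
      · have hwD : w ∉ D := fun h => hw w h hmw
        apply fin [m, w, x1, y1, xp, y2]
        · refine ⟨?_, ?_⟩
          · simp only [List.nodup_cons, List.mem_cons, List.not_mem_nil, or_false, not_or,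
              not_false_eq_true, List.nodup_nil, and_true]
            clear hmm hall hdiff hx1 hxp hw fin main hml hT hm hp hcard
            have q1 := hmw.ne
            clear hmw hD
            have : w ≠ y1 := fun h => hwD (h ▸ hy1)
            have : w ≠ y2 := fun h => hwD (h ▸ hy2)
            have aux : ∀ p q : V, p ∈ l → q ∉ l → p ≠ q := fun p q hp hq h => hq (h ▸ hp)
            have := aux m y1 hmin n1
            have := aux m y2 hmin n2
            have := aux x1 w h1 hwl
            have := aux xp w h2 hwl
            have := aux x1 y1 h1 n1
            have := aux x1 y2 h1 n2
            have := aux xp y1 h2 n1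
            have := aux xp y2 h2 n2
            clear aux hy1 hy2 hwD n1 n2 hmin h1 h2 hwl
            refine ⟨?_, ?_, ?_, ?_, ?_⟩ <;> grind
          · simp only [List.isChain_cons_cons, List.isChain_singleton, and_true]
            exact ⟨hmw, hx1 w hwl, (hx1 y1 n1).symm, hxp y1 n1, (hxp y2 n2).symm⟩
        · simp
        · exact ⟨x1, h1, xp, h2, hm1, hmp, h12, by simp, by simp⟩
        · exact ⟨y1, hy1, y2, hy2, hne, by simp, by simp⟩

/-- a Gᶜ-path with six free vertices -/
theorem six_free [Fintype V] (hGc : Gᶜ.Connected) (B : List V) (hB : GPath Gᶜ B)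
    (C : List V) (hC : C.Nodup) (hC6 : 6 ≤ C.length) (hCB : ∀ v ∈ C, PFree Gᶜ B v) (hne : B ≠ []) :
    Gᶜ.pc 2 + 6 ≤ Fintype.card V + 3 := by
  classical
  have := bound_free hGc B hne hB C.toFinset (by simpa using hCB)
  rw [List.toFinset_card_of_nodup hC] at this
  omega

theorem six_path [Fintype V] (hGc : Gᶜ.Connected) (B : List V) (hB : GPath Gᶜ B)
    (hC6 : 6 ≤ B.length) : Gᶜ.pc 2 + 6 ≤ Fintype.card V + 3 :=
  six_free hGc B hB B hB.1 hC6 (fun v hv => Or.inl hv) (by rintro rfl; simp at hC6)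

end part2

section part3
variable {V : Type*} {G : SimpleGraph V}

theorem long_head {x : V} {l : List V} (hp : GPath G (x :: l))
    (hmax : ∀ l', GPath G l' → l'.length ≤ (x :: l).length) (z : V) (hz : z ∉ x :: l) :
    Gᶜ.Adj z x := by
  apply compl_adj_of
  · rintro rfl; simp at hz
  · intro h
    have := hmax (z :: x :: l) ⟨List.nodup_cons.2 ⟨hz, hp.1⟩,
      List.isChain_cons_cons.2 ⟨h, hp.2⟩⟩
    simp at this

theorem long_last {x : V} {l : List V} (hp : GPath G (l ++ [x]))
    (hmax : ∀ l', GPath G l' → l'.length ≤ (l ++ [x]).length) (z : V) (hz : z ∉ l ++ [x]) :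
    Gᶜ.Adj z x := by
  have hr := hp.reverse
  simp only [List.reverse_append, List.reverse_cons, List.reverse_nil, List.nil_append,
    List.singleton_append] at hr
  apply long_head hr (fun l' h => by simpa using hmax l' h)
  simpa [or_comm] using hz

theorem long_ins {x y : V} {s l : List V} (hp : GPath G (s ++ x :: y :: l))
    (hmax : ∀ l', GPath G l' → l'.length ≤ (s ++ x :: y :: l).length) (z : V)
    (hz : z ∉ s ++ x :: y :: l) (h1 : G.Adj z x) (h2 : G.Adj z y) : False := by
  have := hmax (s ++ x :: z :: y :: l) ⟨by
    have : (s ++ x :: z :: y :: l).Perm (z :: (s ++ x :: y :: l)) := by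
      classical
      rw [List.perm_iff_count]; intro a; simp [List.count_cons]; omega
    exact this.nodup_iff.2 (List.nodup_cons.2 ⟨hz, hp.1⟩), by
    have := hp.2
    rw [List.isChain_append_cons_cons] at this ⊢
    rw [List.isChain_cons_cons]
    exact ⟨this.1, h1.symm, h2, this.2.2⟩⟩
  simp at this

theorem one_A [Fintype V] (hGc : Gᶜ.Connected) (l : List V)
    (hp : GPath G l) (hlen : 5 ≤ l.length) (x1 xp : V) (h1 : x1 ∈ l) (h2 : xp ∈ l) (h12 : x1 ≠ xp)
    (hx1 : ∀ z, z ∉ l → Gᶜ.Adj z x1) (hxp : ∀ z, z ∉ l → Gᶜ.Adj z xp)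
    (y : V) (hy : y ∉ l) (m : V) (hm : ∀ a ∈ l, a ≠ m → Gᶜ.Adj y a)
    (z : V) (hz : z ∉ l) (hzy : z ≠ y) (w : V) (hw : w ∈ l) (hw1 : w ≠ x1) (hwp : w ≠ xp)
    (hzw : Gᶜ.Adj z w) : Gᶜ.pc 2 + 6 ≤ Fintype.card V + 3 := by
  classical
  obtain ⟨a, ha, haT⟩ := pick_mem hp.1 {m, w, x1, xp} (by
    have : Finset.card {m, w, x1, xp} ≤ 4 := Finset.card_le_four
    omega)
  simp only [Finset.mem_insert, Finset.mem_singleton, not_or] at haT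
  obtain ⟨t1, t2, t3, t4⟩ := haT
  have e1 := hm a ha t1
  have e2 := hx1 y hy
  have e3 := hx1 z hz
  have e4 := hxp y hy
  have e5 := hxp z hz
  have aux : ∀ p q : V, p ∈ l → q ∉ l → p ≠ q := fun p q hp hq h => hq (h ▸ hp)
  have i1 := aux a y ha hy
  have i2 := aux a z ha hz
  have i3 := aux x1 y h1 hy
  have i4 := aux x1 z h1 hz
  have i5 := aux xp y h2 hy
  have i6 := aux xp z h2 hz
  have i7 := aux w y hw hy
  have i8 := aux w z hw hz
  clear aux hx1 hxp hm hp
  apply six_free hGc [a, y, x1, z, w] ?_ [a, y, x1, z, w, xp] ?_ (by simp) ?_ (by simp)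
  · refine ⟨?_, ?_⟩
    · simp only [List.nodup_cons, List.mem_cons, List.not_mem_nil, or_false, not_or,
        not_false_eq_true, List.nodup_nil, and_true]
      clear hw hy hz h1 h2 ha e1 e2 e3 e4 e5 hzw
      refine ⟨?_, ?_, ?_, ?_⟩ <;> grind
    · simp only [List.isChain_cons_cons, List.isChain_singleton, and_true]
      exact ⟨e1.symm, e2, e3.symm, hzw⟩
  · simp only [List.nodup_cons, List.mem_cons, List.not_mem_nil, or_false, not_or,
      not_false_eq_true, List.nodup_nil, and_true]
    clear hw hy hz h1 h2 ha e1 e2 e3 e4 e5 hzw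
    refine ⟨?_, ?_, ?_, ?_, ?_⟩ <;> grind
  · intro v hv
    by_cases hvp : v = xp
    · subst hvp
      exact Or.inr ⟨y, by simp, z, by simp, hzy.symm, e4.symm, e5.symm⟩
    · left
      simp only [List.mem_cons, List.not_mem_nil, or_false] at hv ⊢
      tauto

theorem chain_join {R : V → V → Prop} {A B : List V} {x y : V} (h1 : (A ++ [x]).IsChain R)
    (h2 : (y :: B).IsChain R) (h : R x y) : (A ++ x :: y :: B).IsChain R := by
  rw [List.isChain_append_cons_cons]
  exact ⟨h1, h, h2⟩

theorem chain_rev {A : List V} (h : A.IsChain G.Adj) : A.reverse.IsChain G.Adj := by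
  rw [List.isChain_reverse]
  exact h.imp (fun _ _ hab => hab.symm)

theorem exists_nbr (hG : G.Connected) (a b : V) (hab : a ≠ b) : ∃ w, G.Adj a w := by
  by_contra hcon
  push Not at hcon
  have := closed_univ hG {a} a rfl (by
    rintro x rfl y hxy; exact absurd hxy (hcon y)) b
  exact hab this.symm

theorem one_mid [Fintype V] (hGc : Gᶜ.Connected) (x1 u m v xp : V) (s t : List V)
    (hp : GPath G (x1 :: s ++ u :: m :: v :: (t ++ [xp])))
    (hmax : ∀ l', GPath G l' → l'.length ≤ (x1 :: s ++ u :: m :: v :: (t ++ [xp])).length)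
    (y : V) (hy : y ∉ (x1 :: s ++ u :: m :: v :: (t ++ [xp]))) (hym : G.Adj y m)
    (hya : ∀ a ∈ (x1 :: s ++ u :: m :: v :: (t ++ [xp])), a ≠ m → Gᶜ.Adj y a)
    (hall : ∀ z, z ∉ (x1 :: s ++ u :: m :: v :: (t ++ [xp])) → z = y) :
    Gᶜ.pc 2 + 6 ≤ Fintype.card V + 3 := by
  classical
  have c1 : (x1 :: s ++ [u]).IsChain G.Adj := (List.isChain_append_cons_cons.1 hp.2).1
  have c2 := (List.isChain_append_cons_cons.1 hp.2).2
  have hum := c2.1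
  have c3 := (List.isChain_cons_cons.1 c2.2).2
  have hmv := (List.isChain_cons_cons.1 c2.2).1
  have c4 : (m :: v :: t ++ [xp]).IsChain G.Adj := by simpa using c2.2
  have c5 : (y :: m :: v :: t ++ [xp]).IsChain G.Adj := by
    simpa using List.isChain_cons_cons.2 ⟨hym, c2.2⟩
  have hnd : (y :: (x1 :: s ++ u :: m :: v :: (t ++ [xp]))).Nodup := List.nodup_cons.2 ⟨hy, hp.1⟩
  have key : ∀ L : List V, L.IsChain G.Adj →
      ¬ L.Perm (y :: (x1 :: s ++ u :: m :: v :: (t ++ [xp]))) := by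
    intro L hL hP
    have := hmax L ⟨hP.nodup_iff.2 hnd, hL⟩
    rw [hP.length_eq] at this
    simp at this
  have r1 : (u :: s.reverse ++ [x1]).IsChain G.Adj := by simpa using chain_rev c1
  have n1 : ¬ G.Adj x1 xp := by
    intro h
    refine key _ (chain_join c5 c1 h.symm) ?_
    rw [List.perm_iff_count]; intro a; simp [List.count_cons]; omega
  have n2 : ¬ G.Adj u xp := by
    intro h
    refine key _ (chain_join c5 r1 h.symm) ?_
    rw [List.perm_iff_count]; intro a; simp [List.count_cons]; omega
  have n3 : ¬ G.Adj x1 v := by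
    intro h
    refine key _ (chain_join (A := y :: m :: u :: s.reverse) ?_ c3 h) ?_
    · simpa using List.isChain_cons_cons.2 ⟨hym, List.isChain_cons_cons.2 ⟨hum.symm, r1⟩⟩
    rw [List.perm_iff_count]; intro a; simp [List.count_cons]; omega
  have hy' := hya
  simp only [List.nodup_cons, List.mem_cons, List.mem_append, List.nodup_append, List.not_mem_nil,
    List.cons_append, or_false, not_or, List.nodup_nil] at hnd
  have d1 : x1 ≠ xp := by grind
  have d2 : u ≠ xp := by grind
  have d3 : x1 ≠ v := by grind
  have d4 : x1 ≠ u := by grind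
  have d5 : x1 ≠ m := by grind
  have d6 : u ≠ m := by grind
  have d7 : u ≠ v := by grind
  have d8 : m ≠ v := by grind
  have d9 : m ≠ xp := by grind
  have d10 : v ≠ xp := by grind
  have f1 : y ≠ x1 := by grind
  have f2 : y ≠ u := by grind
  have f3 : y ≠ m := by grind
  have f4 : y ≠ v := by grind
  have f5 : y ≠ xp := by grind
  have g1 := compl_adj_of d1 n1
  have g2 := compl_adj_of d2 n2
  have g3 := compl_adj_of d3 n3
  have yu := hya u (by simp) d6
  have yv := hya v (by simp) d8.symm
  obtain ⟨w, hmw⟩ := exists_nbr hGc m v d8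
  have hwG := (SimpleGraph.compl_adj _ _ _).1 hmw
  have w1 : w ≠ y := by rintro rfl; exact hwG.2 hym.symm
  have w2 : w ≠ u := by rintro rfl; exact hwG.2 hum.symm
  have w3 : w ≠ v := by rintro rfl; exact hwG.2 hmv
  have w4 := hwG.1
  have yw := hya w (by by_contra hc; exact w1 (hall w hc)) w4.symm
  clear hya hy' hall key hnd hp hmax hy c1 c2 c3 c4 c5 r1
  by_cases k1 : w = x1
  · subst k1
    apply six_path hGc [m, w, v, y, u, xp] ⟨?_, ?_⟩ (by simp)
    · simp only [List.nodup_cons, List.mem_cons, List.not_mem_nil, or_false, not_or,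
        not_false_eq_true, List.nodup_nil, and_true]
      clear hwG hmw g1 g2 g3 yu yv yw hum hmv hym n1 n2 n3
      refine ⟨?_, ?_, ?_, ?_, ?_⟩ <;> grind
    · simp only [List.isChain_cons_cons, List.isChain_singleton, and_true]
      exact ⟨hmw, g3, yv.symm, yu, g2⟩
  by_cases k2 : w = xp
  · subst k2
    apply six_path hGc [m, w, u, y, v, x1] ⟨?_, ?_⟩ (by simp)
    · simp only [List.nodup_cons, List.mem_cons, List.not_mem_nil, or_false, not_or,
        not_false_eq_true, List.nodup_nil, and_true]
      clear hwG hmw g1 g2 g3 yu yv yw hum hmv hym n1 n2 n3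
      refine ⟨?_, ?_, ?_, ?_, ?_⟩ <;> grind
    · simp only [List.isChain_cons_cons, List.isChain_singleton, and_true]
      exact ⟨hmw, g2.symm, yu.symm, yv, g3.symm⟩
  apply six_path hGc [m, w, y, v, x1, xp] ⟨?_, ?_⟩ (by simp)
  · simp only [List.nodup_cons, List.mem_cons, List.not_mem_nil, or_false, not_or,
      not_false_eq_true, List.nodup_nil, and_true]
    clear hwG hmw g1 g2 g3 yu yv yw hum hmv hym n1 n2 n3
    refine ⟨?_, ?_, ?_, ?_, ?_⟩ <;> grind
  · simp only [List.isChain_cons_cons, List.isChain_singleton, and_true]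
    exact ⟨hmw, yw.symm, yv, g3.symm, g1⟩

theorem one_end [Fintype V] (hG : G.Connected) (hGc : Gᶜ.Connected) (x1 m : V) (t : List V)
    (hp : GPath G (x1 :: m :: t)) (ht : 3 ≤ t.length)
    (y : V) (hy : y ∉ x1 :: m :: t) (hym : G.Adj y m)
    (hya : ∀ a ∈ x1 :: m :: t, a ≠ m → Gᶜ.Adj y a)
    (hall : ∀ z, z ∉ x1 :: m :: t → z = y) :
    G.pc 2 ≤ 3 ∨ Gᶜ.pc 2 + 6 ≤ Fintype.card V + 3 := by
  classical
  have hc := List.isChain_cons_cons.1 hp.2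
  have hn := hp.1
  simp only [List.nodup_cons, List.mem_cons, not_or] at hn hy
  by_cases h : ∃ a ∈ t, G.Adj x1 a
  · left
    obtain ⟨a, ha, hxa⟩ := h
    have := bound_free hG (y :: m :: t) (by simp) ⟨by
      simp only [List.nodup_cons, List.mem_cons, not_or]; tauto,
      List.isChain_cons_cons.2 ⟨hym, hc.2⟩⟩ Finset.univ (by
        intro v _
        by_cases hv : v = x1
        · subst hv
          exact Or.inr ⟨m, by simp, a, by simp [ha], by grind, hc.1, hxa⟩
        · left
          by_contra hcon
          simp only [List.mem_cons, not_or] at hcon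
          exact hcon.1 (hall v (by simp only [List.mem_cons, not_or]; tauto)))
    rw [Finset.card_univ] at this
    omega
  · right
    push Not at h
    obtain ⟨z, hmz⟩ := exists_nbr hGc m x1 (by grind)
    have hz := (SimpleGraph.compl_adj _ _ _).1 hmz
    have z1 : z ≠ x1 := by rintro rfl; exact hz.2 hc.1.symm
    have z2 : z ≠ y := by rintro rfl; exact hz.2 hym.symm
    have z3 := hz.1
    have zt : z ∈ t := by
      by_contra hcon
      apply z2
      apply hall
      simp only [List.mem_cons, not_or]
      exact ⟨z1, z3.symm, hcon⟩
    obtain ⟨w, hw, hwT⟩ := pick_mem hn.2.2 {z} (by simp; omega)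
    obtain ⟨w', hw', hwT'⟩ := pick_mem hn.2.2 {z, w} (by
      have : Finset.card {z, w} ≤ 2 := Finset.card_le_two
      omega)
    simp only [Finset.mem_insert, Finset.mem_singleton, not_or] at hwT hwT'
    have aux : ∀ p q : V, p ∈ t → q ∉ t → p ≠ q := fun p q hp hq h => hq (h ▸ hp)
    have i1 := aux w m hw hn.2.1
    have i2 := aux w x1 hw (by tauto)
    have i3 := aux w y hw (by tauto)
    have i4 := aux w' m hw' hn.2.1
    have i5 := aux w' x1 hw' (by tauto)
    have i6 := aux w' y hw' (by tauto)
    have e1 := hya z (by simp [zt]) z3.symm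
    have e2 := hya w (by simp [hw]) i1
    have e3 := compl_adj_of i2.symm (h w hw)
    have e4 := compl_adj_of i5.symm (h w' hw')
    have j1 : x1 ≠ m := by tauto
    have j2 : y ≠ m := by tauto
    have j3 : y ≠ x1 := by tauto
    clear aux hya hall h hn hp hc
    apply six_path hGc [m, z, y, w, x1, w'] ⟨?_, ?_⟩ (by simp)
    · simp only [List.nodup_cons, List.mem_cons, List.not_mem_nil, or_false, not_or,
        not_false_eq_true, List.nodup_nil, and_true]
      clear hy hym hmz hz e1 e2 e3 e4 hw hw' zt
      refine ⟨?_, ?_, ?_, ?_, ?_⟩ <;> grind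
    · simp only [List.isChain_cons_cons, List.isChain_singleton, and_true]
      exact ⟨hmz, e1.symm, e2, e3.symm, e4⟩

end part3

section part4
variable {V : Type*} {G : SimpleGraph V}

theorem sum_le [Fintype V] (hG : G.Connected) (hGc : Gᶜ.Connected)
    (l0 : List V) (h0 : GPath G l0) (h05 : 5 ≤ l0.length)
    (l1 : List V) (h1 : GPath Gᶜ l1) (h15 : 5 ≤ l1.length) :
    G.pc 2 + Gᶜ.pc 2 ≤ Fintype.card V + 1 := by
  classical
  have hc5 : Gᶜ.pc 2 + 5 ≤ Fintype.card V + 3 := by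
    have := bound_free hGc l1 (by rintro rfl; simp at h15) h1 l1.toFinset
      (fun v hv => Or.inl (by simpa using hv))
    rw [List.toFinset_card_of_nodup h1.1] at this
    omega
  obtain ⟨l, hp, hl0, hmax⟩ := exists_longest G l0 h0
  have hlen : 5 ≤ l.length := h05.trans hl0
  have hD1 : ∀ y, ¬ PFree G l y → y ∉ l ∧ ∃ m ∈ l, ∀ a ∈ l, a ≠ m → Gᶜ.Adj y a := by
    intro y hy
    have hyl : y ∉ l := fun h => hy (Or.inl h)
    refine ⟨hyl, ?_⟩
    have nn : ∀ a ∈ l, y ≠ a := by rintro a ha rfl; exact hyl ha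
    by_cases hm : ∃ m ∈ l, G.Adj y m
    · obtain ⟨m, hm, hym⟩ := hm
      refine ⟨m, hm, fun a ha ham => compl_adj_of (nn a ha) fun hya => hy ?_⟩
      exact Or.inr ⟨a, ha, m, hm, ham, hya, hym⟩
    · push Not at hm
      obtain ⟨m, hml⟩ := List.exists_mem_of_ne_nil l (by rintro rfl; simp at hlen)
      exact ⟨m, hml, fun a ha _ => compl_adj_of (nn a ha) (hm a ha)⟩
  obtain ⟨D, hD⟩ : ∃ D : Finset V, ∀ y, y ∈ D ↔ ¬ PFree G l y :=
    ⟨Finset.univ.filter (fun y => ¬ PFree G l y), by simp⟩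
  have hGd : G.pc 2 ≤ 3 + D.card := by
    have := bound_free hG l (by rintro rfl; simp at hlen) hp (Finset.univ \ D) (by
      intro v hv
      by_contra hc
      exact (Finset.mem_sdiff.1 hv).2 ((hD v).2 hc))
    rw [Finset.card_sdiff_of_subset (Finset.subset_univ _), Finset.card_univ] at this
    have := Finset.card_le_univ D
    omega
  obtain ⟨x1, x2, x3, r, xp, hl⟩ : ∃ x1 x2 x3 r xp, l = x1 :: x2 :: x3 :: (r ++ [xp]) := by
    match l, hlen with
    | x1 :: x2 :: x3 :: x4 :: r, _ =>
      refine ⟨x1, x2, x3, (x4 :: r).dropLast, (x4 :: r).getLast (by simp), ?_⟩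
      rw [List.dropLast_append_getLast]
  have hx1 : ∀ z, z ∉ l → Gᶜ.Adj z x1 := by
    subst hl; exact long_head hp hmax
  have hxp : ∀ z, z ∉ l → Gᶜ.Adj z xp := by
    subst hl
    exact long_last (l := x1 :: x2 :: x3 :: r) (by simpa using hp) (by simpa using hmax)
  have hnd := hp.1
  rw [hl] at hnd
  simp only [List.nodup_cons, List.mem_cons, List.mem_append, List.not_mem_nil, or_false,
    not_or] at hnd
  obtain ⟨⟨a1, a2, -, a3⟩, ⟨a4, -, a5⟩, ⟨-, a6⟩, -⟩ := hnd
  have m1 : x1 ∈ l := by simp [hl]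
  have m2 : x2 ∈ l := by simp [hl]
  have m3 : x3 ∈ l := by simp [hl]
  have mp : xp ∈ l := by simp [hl]
  rcases Nat.lt_or_ge D.card 2 with hd | hd
  swap
  · have : ∀ y, ∃ m, y ∈ D → m ∈ l ∧ ∀ a ∈ l, a ≠ m → Gᶜ.Adj y a := by
      intro y
      by_cases hy : y ∈ D
      · obtain ⟨m, hm⟩ := (hD1 y ((hD y).1 hy)).2
        exact ⟨m, fun _ => hm⟩
      · exact ⟨y, fun h => absurd h hy⟩
    choose mm hmm using this
    have := case_two hGc l hp hlen x1 xp m1 mp a3 hx1 hxp D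
      (fun y hy => (hD1 y ((hD y).1 hy)).1) mm (fun y hy => (hmm y hy).1)
      (fun y hy => (hmm y hy).2) hd
    omega
  rcases Nat.lt_or_ge D.card 1 with hd0 | hd1
  · omega
  suffices hs : G.pc 2 ≤ 3 ∨ Gᶜ.pc 2 + 6 ≤ Fintype.card V + 3 by
    rcases hs with h | h <;> omega
  obtain ⟨y, hy⟩ := Finset.card_eq_one.1 (show D.card = 1 by omega)
  have hyD : ¬ PFree G l y := (hD y).1 (by simp [hy])
  obtain ⟨hyl, m, hml, hmy⟩ := hD1 y hyD
  by_cases hz : ∃ z, z ∉ l ∧ z ≠ y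
  · right
    obtain ⟨z, hzl, hzy⟩ := hz
    by_cases hz2 : G.Adj z x2
    · by_cases hz3 : G.Adj z x3
      · subst hl
        exact absurd (long_ins (s := [x1]) hp hmax z hzl hz2 hz3) id
      · exact one_A hGc l hp hlen x1 xp m1 mp a3 hx1 hxp y hyl m hmy z hzl hzy x3 m3
          (Ne.symm a2) a6 (compl_adj_of (by rintro rfl; exact hzl m3) hz3)
    · exact one_A hGc l hp hlen x1 xp m1 mp a3 hx1 hxp y hyl m hmy z hzl hzy x2 m2
          (Ne.symm a1) a5 (compl_adj_of (by rintro rfl; exact hzl m2) hz2)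
  · push Not at hz
    obtain ⟨q, hyq⟩ := exists_nbr hG y x1 (by rintro rfl; exact hyl m1)
    have hql : q ∈ l := by
      by_contra hc
      exact hyq.ne (hz q hc).symm
    have hya : ∀ a ∈ l, a ≠ q → Gᶜ.Adj y a := by
      intro a ha haq
      apply compl_adj_of (by rintro rfl; exact hyl ha)
      intro h
      exact hyD (Or.inr ⟨a, ha, q, hql, haq, h, hyq⟩)
    have hq1 : q ≠ x1 := by
      rintro rfl; exact ((SimpleGraph.compl_adj _ _ _).1 (hx1 y hyl)).2 hyq
    have hqp : q ≠ xp := by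
      rintro rfl; exact ((SimpleGraph.compl_adj _ _ _).1 (hxp y hyl)).2 hyq
    obtain ⟨s, t, hst⟩ := List.append_of_mem hql
    have hs : s ≠ [] := by
      rintro rfl
      rw [hl] at hst
      simp at hst
      exact hq1 hst.1.symm
    have ht : t ≠ [] := by
      rintro rfl
      rw [hl] at hst
      have := congrArg List.getLast? hst
      rw [show x1 :: x2 :: x3 :: (r ++ [xp]) = (x1 :: x2 :: x3 :: r) ++ [xp] by simp] at this
      simp only [List.getLast?_append, List.getLast?_singleton, Option.some_or,
        Option.some.injEq] at this
      exact hqp this.symm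
    clear hl hx1 hxp hmy hml
    have hlen' : s.length + t.length + 1 = l.length := by rw [hst]; simp; omega
    rcases s with _ | ⟨b1, s⟩
    · exact absurd rfl hs
    rcases List.eq_nil_or_concat s with rfl | ⟨s, u, rfl⟩
    · subst hst
      exact one_end hG hGc b1 q t hp (by simp at hlen; omega) y hyl hyq hya hz
    obtain ⟨t, bp, rfl⟩ := (List.eq_nil_or_concat t).resolve_left ht
    rcases t with _ | ⟨v, t⟩
    · have hr : l.reverse = bp :: q :: (b1 :: (s ++ [u])).reverse := by rw [hst]; simp
      refine one_end hG hGc bp q (b1 :: (s ++ [u])).reverse (hr ▸ hp.reverse) ?_ y ?_ hyq ?_ ?_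
      · simp at hlen' ⊢; omega
      · rw [← hr]; simpa using hyl
      · rw [← hr]; simpa using hya
      · rw [← hr]; simpa using hz
    · right
      have hr : l = b1 :: s ++ u :: q :: v :: (t ++ [bp]) := by rw [hst]; simp
      subst hr
      exact one_mid hGc b1 u q v bp s t hp hmax y hyl hyq hya hz

end part4

section part5
variable {V : Type*} {G : SimpleGraph V}

def DS (G : SimpleGraph V) (u v : V) : Prop :=
  G.Adj u v ∧ (∀ x, x ≠ u → x ≠ v → (∀ y, G.Adj x y ↔ y = u) ∨ (∀ y, G.Adj x y ↔ y = v)) ∧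
  (∃ a, a ≠ v ∧ G.Adj u a) ∧ (∃ b, b ≠ u ∧ G.Adj v b)

def No5 (G : SimpleGraph V) : Prop := ∀ a b c d e : V, G.Adj a b → G.Adj b c → G.Adj c d →
  G.Adj d e → a ≠ c → a ≠ d → a ≠ e → b ≠ d → b ≠ e → c ≠ e → False

theorem no5_of (h : ∀ l, GPath G l → l.length < 5) : No5 G := by
  intro a b c d e h1 h2 h3 h4 n1 n2 n3 n4 n5 n6
  have := h [a, b, c, d, e] ⟨by
    simp only [List.nodup_cons, List.mem_cons, List.not_mem_nil, or_false, not_or,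
        not_false_eq_true, List.nodup_nil, and_true]
    have := h1.ne
    have := h2.ne
    have := h3.ne
    have := h4.ne
    tauto, by
    simp only [List.isChain_cons_cons, List.isChain_singleton, and_true]
    exact ⟨h1, h2, h3, h4⟩⟩
  simp at this

theorem no_dom [Nontrivial V] (hGc : Gᶜ.Connected) (v : V) (h : ∀ y, y ≠ v → G.Adj v y) : False := by
  obtain ⟨w, hw⟩ := exists_ne v
  obtain ⟨z, hz⟩ := exists_nbr hGc v w hw.symm
  have := (SimpleGraph.compl_adj _ _ _).1 hz
  exact this.2 (h z this.1.symm)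

theorem dist2 [Nontrivial V] (hG : G.Connected) (hGc : Gᶜ.Connected) (v : V) :
    ∃ s t, G.Adj v s ∧ G.Adj s t ∧ t ≠ v ∧ ¬ G.Adj v t := by
  by_contra hcon
  push Not at hcon
  apply no_dom hGc v
  intro y hy
  have := closed_univ hG {x | x = v ∨ G.Adj v x} v (Or.inl rfl) (by
    rintro x (rfl | hx) y hxy
    · exact Or.inr hxy
    · by_cases hyv : y = v
      · exact Or.inl hyv
      · exact Or.inr (hcon x y hx hxy hyv)) y
  rcases this with h | h
  · exact absurd h hy
  · exact h

theorem four_path [Nontrivial V] (hG : G.Connected) (hGc : Gᶜ.Connected) :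
    ∃ a u v b, G.Adj a u ∧ G.Adj u v ∧ G.Adj v b ∧ a ≠ v ∧ a ≠ b ∧ u ≠ b := by
  obtain ⟨x, -⟩ := exists_ne (hG.nonempty.some)
  obtain ⟨s, t, h1, h2, h3, h4⟩ := dist2 hG hGc x
  obtain ⟨s2, t2, k1, k2, k3, k4⟩ := dist2 hG hGc s
  have i1 : t2 ≠ x := by rintro rfl; exact k4 h1.symm
  have i2 : t2 ≠ t := by rintro rfl; exact k4 h2
  by_cases e1 : s2 = x
  · subst e1
    exact ⟨t, s, s2, t2, h2.symm, k1, k2, h3, i2.symm, k3.symm⟩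
  · exact ⟨x, s, s2, t2, h1, k1, k2, Ne.symm e1, i1.symm, k3.symm⟩

theorem no5_closed (hn : No5 G) {a u v b : V} (h1 : G.Adj a u) (h2 : G.Adj u v) (h3 : G.Adj v b)
    (n1 : a ≠ v) (n2 : a ≠ b) (n3 : u ≠ b) (x y : V) (hx : G.Adj u x) (hxy : G.Adj x y) :
    G.Adj u y ∨ G.Adj v y := by
  by_contra hcon
  push Not at hcon
  obtain ⟨k1, k2⟩ := hcon
  have i1 : y ≠ u := by rintro rfl; exact k2 h2.symm
  have i2 : y ≠ v := by rintro rfl; exact k1 h2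
  have i3 : y ≠ b := by rintro rfl; exact k2 h3
  have i4 : y ≠ a := by rintro rfl; exact k1 h1.symm
  have i5 : x ≠ v := by rintro rfl; exact k2 hxy
  by_cases hxb : x = b
  · subst hxb
    exact hn a u v x y h1 h2 h3 hxy n1 n2 i4.symm n3 i1.symm i2.symm
  · exact hn y x u v b hxy.symm hx.symm h2 h3 i1 i2 i3 i5 hxb n3

theorem no5_tri [Nontrivial V] (hGc : Gᶜ.Connected) (hn : No5 G) {a u v b : V} (h1 : G.Adj a u)
    (h2 : G.Adj u v) (h3 : G.Adj v b)
    (n1 : a ≠ v) (n2 : a ≠ b) (n3 : u ≠ b) (hall : ∀ y, G.Adj u y ∨ G.Adj v y)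
    (hav : G.Adj a v) : False := by
  apply no_dom hGc v
  intro y hy
  by_contra hcon
  have hu := (hall y).resolve_right hcon
  have i1 : y ≠ a := by rintro rfl; exact hcon hav.symm
  have i2 : y ≠ b := by rintro rfl; exact hcon h3
  exact hn y u a v b hu.symm h1.symm hav h3 i1 hy i2 h2.ne n3 n2

theorem ds_of_no5 [Nontrivial V] (hG : G.Connected) (hGc : Gᶜ.Connected) (hn : No5 G) :
    ∃ u v, DS G u v := by
  obtain ⟨a, u, v, b, h1, h2, h3, n1, n2, n3⟩ := four_path hG hGc
  have hall : ∀ y, G.Adj u y ∨ G.Adj v y := by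
    apply closed_univ hG {y | G.Adj u y ∨ G.Adj v y} u (Or.inr h2.symm)
    rintro x (hx | hx) y hxy
    · exact no5_closed hn h1 h2 h3 n1 n2 n3 x y hx hxy
    · exact (no5_closed hn h3.symm h2.symm h1.symm n3.symm n2.symm n1.symm x y hx hxy).symm
  have t1 : ¬ G.Adj a v := no5_tri hGc hn h1 h2 h3 n1 n2 n3 hall
  have t2 : ¬ G.Adj b u := no5_tri hGc hn h3.symm h2.symm h1.symm n3.symm n2.symm n1.symm
    (fun y => (hall y).symm)
  have hdis : ∀ x, G.Adj u x → G.Adj v x → False := by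
    intro x hx hx'
    have i1 : x ≠ a := by rintro rfl; exact t1 hx'.symm
    have i2 : x ≠ b := by rintro rfl; exact t2 hx.symm
    exact hn a u x v b h1 hx hx'.symm h3 i1.symm n1 n2 h2.ne n3 i2
  have hA : ∀ x y, G.Adj u x → G.Adj u y → x ≠ v → y ≠ v → ¬ G.Adj x y := by
    intro x y hx hy hxv hyv hxy
    exact hn x y u v b hxy hy.symm h2 h3 hx.ne' hxv (by rintro rfl; exact t2 hx.symm) hyv
      (by rintro rfl; exact t2 hy.symm) n3
  have hB : ∀ x y, G.Adj v x → G.Adj v y → x ≠ u → y ≠ u → ¬ G.Adj x y := by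
    intro x y hx hy hxu hyu hxy
    exact hn x y v u a hxy hy.symm h2.symm h1.symm hx.ne' hxu (by rintro rfl; exact t1 hx.symm) hyu
      (by rintro rfl; exact t1 hy.symm) n1.symm
  have hAB : ∀ x y, G.Adj u x → G.Adj v y → x ≠ v → y ≠ u → ¬ G.Adj x y := by
    intro x y hx hy hxv hyu hxy
    by_cases e1 : ∃ a', G.Adj u a' ∧ a' ≠ v ∧ a' ≠ x
    · obtain ⟨a', k1, k2, k3⟩ := e1
      exact hn a' u x y v k1.symm hx hxy hy.symm k3 (by rintro rfl; exact hdis _ k1 hy) k2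
        hyu.symm h2.ne hxv
    by_cases e2 : ∃ b', G.Adj v b' ∧ b' ≠ u ∧ b' ≠ y
    · obtain ⟨a', k1, k2, k3⟩ := e2
      exact hn a' v y x u k1.symm hy hxy.symm hx.symm k3 (by rintro rfl; exact hdis _ hx k1) k2
        hxv.symm h2.ne' hyu
    push Not at e1 e2
    have := closed_univ hGc {z | z = u ∨ z = y} u (Or.inl rfl) (by
      rintro z (rfl | rfl) w hw
      · have hw := (SimpleGraph.compl_adj _ _ _).1 hw
        exact Or.inr (e2 w ((hall w).resolve_left hw.2) hw.1.symm)
      · have hw := (SimpleGraph.compl_adj _ _ _).1 hw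
        left
        by_contra hwu
        rcases hall w with h | h
        · by_cases hwv : w = v
          · subst hwv; exact hw.2 hy.symm
          · have := e1 w h hwv
            subst this
            exact hw.2 hxy.symm
        · exact hw.1 (e2 w h hwu).symm) v
    rcases this with h | h
    · exact h2.ne' h
    · exact hy.ne h
  refine ⟨u, v, h2, ?_, ⟨a, n1, h1.symm⟩, ⟨b, n3.symm, h3⟩⟩
  intro x hxu hxv
  rcases hall x with hx | hx
  · left
    intro y
    constructor
    · intro hxy
      by_contra hyu
      have hyv : y ≠ v := by rintro rfl; exact hdis x hx hxy.symm
      rcases hall y with h | h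
      · exact hA x y hx h hxv hyv hxy
      · exact hAB x y hx h hxv hyu hxy
    · rintro rfl; exact hx.symm
  · right
    intro y
    constructor
    · intro hxy
      by_contra hyv
      have hyu : y ≠ u := by rintro rfl; exact hdis x hxy.symm hx
      rcases hall y with h | h
      · exact hAB y x h hx hyv hxu hxy.symm
      · exact hB x y hx h hxu hyu hxy
    · rintro rfl; exact hx.symm

theorem iso_of_ds [Fintype V] {u v : V} (h : DS G u v) :
    ∃ n₁ n₂ : ℕ, 1 ≤ n₁ ∧ 1 ≤ n₂ ∧ Nonempty (G ≃g doubleStar n₁ n₂) := by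
  classical
  obtain ⟨huv, hx, ⟨a, hav, hua⟩, ⟨b, hbu, hvb⟩⟩ := h
  let A := {x : V // x ≠ v ∧ G.Adj u x}
  let B := {x : V // x ≠ u ∧ G.Adj v x}
  let eA : A ≃ Fin (Fintype.card A) := Fintype.equivFin A
  let eB : B ≃ Fin (Fintype.card B) := Fintype.equivFin B
  let f : Fin 2 ⊕ (Fin (Fintype.card A) ⊕ Fin (Fintype.card B)) → V :=
    Sum.elim (fun i => if i = 0 then u else v)
      (Sum.elim (fun i => (eA.symm i).1) (fun j => (eB.symm j).1))
  have f0 : f (Sum.inl 0) = u := by simp [f]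
  have f1 : f (Sum.inl 1) = v := by simp [f]
  have fA : ∀ i, f (Sum.inr (Sum.inl i)) = (eA.symm i).1 := fun i => rfl
  have fB : ∀ i, f (Sum.inr (Sum.inr i)) = (eB.symm i).1 := fun i => rfl
  have hdis : ∀ x, x ≠ v → x ≠ u → G.Adj u x → G.Adj v x → False := by
    intro x h1 h2 h3 h4
    rcases hx x h2 h1 with h | h
    · exact huv.ne' ((h v).1 h4.symm)
    · exact huv.ne ((h u).1 h3.symm)
  have adjA : ∀ x : A, ∀ y, G.Adj x.1 y ↔ y = u := by
    intro x
    rcases hx x.1 x.2.2.ne' x.2.1 with h | h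
    · exact h
    · exact absurd ((h u).1 x.2.2.symm) huv.ne
  have adjB : ∀ x : B, ∀ y, G.Adj x.1 y ↔ y = v := by
    intro x
    rcases hx x.1 x.2.1 x.2.2.ne' with h | h
    · exact absurd ((h v).1 x.2.2.symm) huv.ne'
    · exact h
  have neAB : ∀ (x : A) (y : B), x.1 ≠ y.1 := by
    intro x y h
    have := (adjA x v).1 (h ▸ y.2.2.symm)
    exact huv.ne' this
  have hinj : Function.Injective f := by
    rintro (i | i | i) (j | j | j) hij
    · fin_cases i <;> fin_cases j <;> simp_all [f, huv.ne, huv.ne']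
    · exfalso
      fin_cases i
      · exact (eA.symm j).2.2.ne (by simpa [f] using hij)
      · exact (eA.symm j).2.1 (by simpa [f] using hij.symm)
    · exfalso
      fin_cases i
      · exact (eB.symm j).2.1 (by simpa [f] using hij.symm)
      · exact (eB.symm j).2.2.ne (by simpa [f] using hij)
    · exfalso
      fin_cases j
      · exact (eA.symm i).2.2.ne (by simpa [f] using hij.symm)
      · exact (eA.symm i).2.1 (by simpa [f] using hij)
    · rw [fA, fA] at hij
      rw [eA.symm.injective (Subtype.ext hij)]
    · exact absurd hij (neAB _ _)
    · exfalso
      fin_cases j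
      · exact (eB.symm i).2.1 (by simpa [f] using hij)
      · exact (eB.symm i).2.2.ne (by simpa [f] using hij.symm)
    · exact absurd hij.symm (neAB _ _)
    · rw [fB, fB] at hij
      rw [eB.symm.injective (Subtype.ext hij)]
  have hsurj : Function.Surjective f := by
    intro x
    by_cases h1 : x = u
    · exact ⟨_, f0.trans h1.symm⟩
    by_cases h2 : x = v
    · exact ⟨_, f1.trans h2.symm⟩
    rcases hx x h1 h2 with h | h
    · exact ⟨Sum.inr (Sum.inl (eA ⟨x, h2, ((h u).2 rfl).symm⟩)), by rw [fA]; simp⟩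
    · exact ⟨Sum.inr (Sum.inr (eB ⟨x, h1, ((h v).2 rfl).symm⟩)), by rw [fB]; simp⟩
  refine ⟨Fintype.card A, Fintype.card B, Fintype.card_pos_iff.2 ⟨⟨a, hav, hua⟩⟩,
    Fintype.card_pos_iff.2 ⟨⟨b, hbu, hvb⟩⟩, ⟨RelIso.symm ⟨Equiv.ofBijective f ⟨hinj, hsurj⟩, ?_⟩⟩⟩
  intro p q
  change G.Adj (f p) (f q) ↔ (doubleStar _ _).Adj p q
  rcases p with i | i | i <;> rcases q with j | j | j
  · fin_cases i <;> fin_cases j <;> simp [f, doubleStar, huv, huv.symm]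
  · rw [fA]
    have := adjA (eA.symm j)
    have hne := huv.ne'
    fin_cases i <;> simp [f, doubleStar, G.adj_comm u, G.adj_comm v, this, hne]
  · rw [fB]
    have := adjB (eB.symm j)
    have hne := huv.ne
    fin_cases i <;> simp [f, doubleStar, G.adj_comm u, G.adj_comm v, this, hne]
  · rw [fA]
    have := adjA (eA.symm i)
    have hne := huv.ne'
    fin_cases j <;> simp [f, doubleStar, this, hne]
  · rw [fA, fA, adjA]
    have := (eA.symm j).2.2.ne'
    simp [doubleStar, this]
  · rw [fA, fB, adjA]
    have := (eB.symm j).2.1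
    simp [doubleStar, this]
  · rw [fB]
    have := adjB (eB.symm i)
    have hne := huv.ne
    fin_cases j <;> simp [f, doubleStar, this, hne]
  · rw [fA, fB, adjB]
    have := (eA.symm j).2.1
    simp [doubleStar, this]
  · rw [fB, fB, adjB]
    have := (eB.symm j).2.2.ne'
    simp [doubleStar, this]

theorem ds_of_iso {n₁ n₂ : ℕ} (h1 : 1 ≤ n₁) (h2 : 1 ≤ n₂) (e : G ≃g doubleStar n₁ n₂) :
    ∃ u v, DS G u v := by
  have hadj : ∀ p q, G.Adj (e.symm p) (e.symm q) ↔ (doubleStar n₁ n₂).Adj p q :=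
    fun p q => e.symm.map_adj_iff
  refine ⟨e.symm (Sum.inl 0), e.symm (Sum.inl 1), ?_, ?_, ?_, ?_⟩
  · rw [hadj]; simp [doubleStar]
  · intro x hx0 hx1
    obtain ⟨p, rfl⟩ := e.symm.surjective x
    rcases p with i | i | i
    · exfalso
      fin_cases i <;> simp_all
    · left
      intro y
      obtain ⟨q, rfl⟩ := e.symm.surjective y
      rw [hadj, e.symm.injective.eq_iff]
      rcases q with j | j | j
      · fin_cases j <;> simp [doubleStar]
      · simp [doubleStar]
      · simp [doubleStar]
    · right
      intro y
      obtain ⟨q, rfl⟩ := e.symm.surjective y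
      rw [hadj, e.symm.injective.eq_iff]
      rcases q with j | j | j
      · fin_cases j <;> simp [doubleStar]
      · simp [doubleStar]
      · simp [doubleStar]
  · refine ⟨e.symm (Sum.inr (Sum.inl ⟨0, h1⟩)), ?_, ?_⟩
    · rw [Ne, e.symm.injective.eq_iff]; simp
    · rw [hadj]; simp [doubleStar]
  · refine ⟨e.symm (Sum.inr (Sum.inr ⟨0, h2⟩)), ?_, ?_⟩
    · rw [Ne, e.symm.injective.eq_iff]; simp
    · rw [hadj]; simp [doubleStar]

end part5

section part6
variable {V : Type*} {G : SimpleGraph V}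

theorem DS.symm {u v : V} (h : DS G u v) : DS G v u :=
  ⟨h.1.symm, fun x h1 h2 => (h.2.1 x h2 h1).symm, h.2.2.2, h.2.2.1⟩

theorem pc_spec [Fintype V] (hG : G.Connected) : ∃ c, G.IsPCColoring 2 (G.pc 2) c := by
  classical
  obtain ⟨a⟩ := hG.nonempty
  obtain ⟨k, c, hc, -⟩ := (main_bound hG [a] (by simp) (by simp) (by simp) {a} (by simp)
    (by simp)).1
  exact Nat.sInf_mem (s := {k | ∃ c : Sym2 V → ℕ, G.IsPCColoring 2 k c}) ⟨k, c, hc⟩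

theorem leafpath {c1 c2 : V} (h : DS G c1 c2) {x y : V} (hx1 : x ≠ c1) (hx2 : x ≠ c2)
    (hx : G.Adj x c1) (hyx : y ≠ x) (c : Sym2 V → ℕ) (p : G.Walk x y) (hp : p.IsPath)
    (hd : p.IsDistProper 2 c) :
    y = c1 ∨ (y = c2 ∧ c s(x, c1) ≠ c s(c1, c2)) ∨
    (y ≠ c1 ∧ y ≠ c2 ∧ G.Adj y c1 ∧ c s(x, c1) ≠ c s(y, c1)) ∨
    (y ≠ c1 ∧ y ≠ c2 ∧ G.Adj y c2 ∧ c s(x, c1) ≠ c s(y, c2)) := by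
  have hxa : ∀ z, G.Adj x z ↔ z = c1 := by
    rcases h.2.1 x hx1 hx2 with k | k
    · exact k
    · exact absurd ((k _).1 hx) h.1.ne
  cases p with
  | nil => exact absurd rfl hyx
  | @cons _ q _ h1 p1 =>
    obtain rfl := (hxa _).1 h1
    cases p1 with
    | nil => exact Or.inl rfl
    | @cons _ z _ h2 p2 =>
      right
      have hd01 := hd 0 1 (by simp) (by simp) (by simp) (by simp)
      simp only [Walk.edges_cons, List.getElem_cons_zero, List.getElem_cons_succ] at hd01
      by_cases hz : z = c2
      · subst hz
        cases p2 with
        | nil => exact Or.inl ⟨rfl, hd01⟩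
        | @cons _ w _ h3 p3 =>
          have hd02 := hd 0 2 (by simp) (by simp) (by simp) (by simp)
          simp only [Walk.edges_cons, List.getElem_cons_zero, List.getElem_cons_succ] at hd02
          simp only [Walk.cons_isPath_iff, Walk.support_cons, List.mem_cons, not_or] at hp
          have hwc : w ≠ q := fun e => hp.1.2.2 (e ▸ p3.start_mem_support)
          have hz3 := hp.1.1.2
          have k : ∀ y, G.Adj w y ↔ y = z := by
            rcases h.2.1 w hwc h3.ne' with k | k
            · exact absurd ((k _).1 h3.symm) h.1.ne'
            · exact k
          cases p3 with
          | nil =>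
            right; right
            exact ⟨hwc, h3.ne', h3.symm, by rw [Sym2.eq_swap (a := y)]; exact hd02⟩
          | @cons _ r _ h4 p4 =>
            obtain rfl := (k _).1 h4
            simp at hz3
      · have k : ∀ y, G.Adj z y ↔ y = q := by
          rcases h.2.1 z h2.ne' hz with k | k
          · exact k
          · exact absurd ((k _).1 h2.symm) h.1.ne
        simp only [Walk.cons_isPath_iff, Walk.support_cons, List.mem_cons, not_or] at hp
        have hz3 := hp.1.2
        cases p2 with
        | nil =>
          right; left
          exact ⟨h2.ne', hz, h2.symm, by rw [Sym2.eq_swap (a := y)]; exact hd01⟩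
        | @cons _ r _ h4 p4 =>
          obtain rfl := (k _).1 h4
          simp at hz3

theorem ds_compl_lower [Fintype V] (hGc : Gᶜ.Connected) {u v : V} (h : DS G u v) :
    3 ≤ Gᶜ.pc 2 := by
  obtain ⟨c, hc1, hc2⟩ := pc_spec hGc
  obtain ⟨p, hp, hd⟩ := hc2 u v h.1.ne
  cases p with
  | nil => exact absurd rfl h.1.ne
  | cons h1 p1 =>
    cases p1 with
    | nil => exact absurd h.1 ((SimpleGraph.compl_adj _ _ _).1 h1).2
    | @cons _ z _ h2 p2 =>
      cases p2 with
      | nil =>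
        exfalso
        have k1 := (SimpleGraph.compl_adj _ _ _).1 h1
        have k2 := (SimpleGraph.compl_adj _ _ _).1 h2
        rcases h.2.1 _ k1.1.symm k2.1 with k | k
        · exact k1.2 ((k _).2 rfl).symm
        · exact k2.2 ((k _).2 rfl)
      | cons h3 p3 =>
        have d1 := hd 0 1 (by simp) (by simp) (by simp) (by simp)
        have d2 := hd 0 2 (by simp) (by simp) (by simp) (by simp)
        have d3 := hd 1 2 (by simp) (by simp) (by simp) (by simp)
        simp only [Walk.edges_cons, List.getElem_cons_zero, List.getElem_cons_succ] at d1 d2 d3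
        have e1 := hc1 _ ((SimpleGraph.mem_edgeSet _).2 h1)
        have e2 := hc1 _ ((SimpleGraph.mem_edgeSet _).2 h2)
        have e3 := hc1 _ ((SimpleGraph.mem_edgeSet _).2 h3)
        omega

theorem ds_lower [Fintype V] (hG : G.Connected) {u v : V} (h : DS G u v) :
    Fintype.card V ≤ G.pc 2 + 1 := by
  classical
  obtain ⟨c, hc1, hc2⟩ := pc_spec hG
  let ct : V → V := fun x => if G.Adj x u then u else v
  have ctv : ct v = u := by simp [ct, h.1.symm]
  have ctu : ∀ x, G.Adj x u → ct x = u := fun x hx => by simp [ct, hx]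
  have dis : ∀ x, x ≠ u → x ≠ v → G.Adj x u → G.Adj x v → False := by
    intro x h1 h2 h3 h4
    rcases h.2.1 x h1 h2 with k | k
    · exact h.1.ne' ((k _).1 h4)
    · exact h.1.ne ((k _).1 h3)
  have ctv' : ∀ x, x ≠ u → x ≠ v → G.Adj x v → ct x = v := fun x h1 h2 hx => by
    have : ¬ G.Adj x u := fun h' => dis x h1 h2 h' hx
    simp [ct, this]
  have hct : ∀ x, x ≠ u → G.Adj x (ct x) := by
    intro x hxu
    by_cases hxv : x = v
    · subst hxv; rw [ctv]; exact h.1.symm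
    rcases h.2.1 x hxu hxv with k | k
    · rw [ctu x ((k _).2 rfl)]; exact (k _).2 rfl
    · rw [ctv' x hxu hxv ((k _).2 rfl)]; exact (k _).2 rfl
  have key : ∀ x y, x ≠ u → x ≠ v → y ≠ u → y ≠ x → c s(x, ct x) ≠ c s(y, ct y) := by
    intro x y hxu hxv hyu hyx
    rcases h.2.1 x hxu hxv with k | k
    · have hx : G.Adj x u := (k _).2 rfl
      obtain ⟨p, hp, hd⟩ := hc2 x y hyx.symm
      rw [ctu x hx]
      rcases leafpath h hxu hxv hx hyx c p hp hd with r | ⟨r, r'⟩ | ⟨r1, r2, r3, r4⟩ | ⟨r1, r2, r3, r4⟩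
      · exact absurd r hyu
      · rw [r, ctv, Sym2.eq_swap (a := v)]; exact r'
      · rw [ctu y r3]; exact r4
      · rw [ctv' y r1 r2 r3]; exact r4
    · have hx : G.Adj x v := (k _).2 rfl
      rw [ctv' x hxu hxv hx]
      by_cases hyv : y = v
      · subst hyv
        obtain ⟨p, hp, hd⟩ := hc2 x u hxu
        rw [ctv]
        rcases leafpath h.symm hxv hxu hx hxu.symm c p hp hd with
          r | ⟨r, r'⟩ | ⟨r1, r2, r3, r4⟩ | ⟨r1, r2, r3, r4⟩
        · exact absurd r hyu.symm
        · exact r'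
        · exact absurd rfl r2
        · exact absurd rfl r2
      · obtain ⟨p, hp, hd⟩ := hc2 x y hyx.symm
        rcases leafpath h.symm hxv hxu hx hyx c p hp hd with
          r | ⟨r, r'⟩ | ⟨r1, r2, r3, r4⟩ | ⟨r1, r2, r3, r4⟩
        · exact absurd r hyv
        · exact absurd r hyu
        · rw [ctv' y r2 r1 r3]; exact r4
        · rw [ctu y r3]; exact r4
  have : (Finset.univ.erase u).card ≤ (Finset.range (G.pc 2)).card := by
    apply Finset.card_le_card_of_injOn (fun x => c s(x, ct x))
    · intro x hx
      have hx : x ≠ u := by simpa using hx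
      simpa using hc1 _ ((SimpleGraph.mem_edgeSet _).2 (hct x hx))
    · intro x hx y hy hxy
      have hx : x ≠ u := by simpa using hx
      have hy : y ≠ u := by simpa using hy
      by_contra hne
      by_cases hxv : x = v
      · exact key y x hy (by rintro rfl; exact hne hxv) hx hne hxy.symm
      · exact key x y hx hxv hy (Ne.symm hne) hxy
  rw [Finset.card_erase_of_mem (Finset.mem_univ _), Finset.card_univ, Finset.card_range] at this
  omega

theorem ds_sum [Fintype V] (hG : G.Connected) (hGc : Gᶜ.Connected) {u v : V} (h : DS G u v) :
    G.pc 2 + Gᶜ.pc 2 = Fintype.card V + 2 := by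
  classical
  have l1 := ds_lower hG h
  have l2 := ds_compl_lower hGc h
  obtain ⟨huv, hx, ⟨a, hav, hua⟩, ⟨b, hbu, hvb⟩⟩ := h
  have hnA : ∀ x, x ≠ v → G.Adj u x → ∀ y, y ≠ u → y ≠ x → Gᶜ.Adj x y := by
    intro x h1 h2 y hyu hyx
    apply compl_adj_of hyx.symm
    rcases hx x h2.ne' h1 with k | k
    · rwa [k]
    · exact absurd ((k _).1 h2.symm) huv.ne
  have hnB : ∀ x, x ≠ u → G.Adj v x → ∀ y, y ≠ v → y ≠ x → Gᶜ.Adj x y := by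
    intro x h1 h2 y hyu hyx
    apply compl_adj_of hyx.symm
    rcases hx x h1 h2.ne' with k | k
    · exact absurd ((k _).1 h2.symm) huv.ne'
    · rwa [k]
  have hab : a ≠ b := by
    rintro rfl
    have := hnA a hav hua v huv.ne' hav.symm
    exact ((SimpleGraph.compl_adj _ _ _).1 this).2 hvb.symm
  have u1 := bound_free hG [a, u, v, b] (by simp) ⟨by
      simp [hua.ne', hav, hab, huv.ne, hbu.symm, hvb.ne], by simp [hua.symm, huv, hvb]⟩ {a, u, v, b}
    (fun x hx => Or.inl (by simpa using hx))
  have hc4 : Finset.card {a, u, v, b} = 4 := by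
    rw [Finset.card_insert_of_notMem, Finset.card_insert_of_notMem, Finset.card_insert_of_notMem,
      Finset.card_singleton]
    · simp [hvb.ne]
    · simp [huv.ne, hbu.symm]
    · simp [hua.ne', hav, hab]
  have u2 := bound_free hGc [u, b, a, v] (by simp) ⟨by
      simp [hua.ne, hav, hab.symm, huv.ne, hbu.symm, hvb.ne'], by
      simp only [List.isChain_cons_cons, List.isChain_singleton, and_true]
      exact ⟨(hnB b hbu hvb u huv.ne hbu.symm).symm, (hnA a hav hua b hbu hab.symm).symm,
        hnA a hav hua v huv.ne' hav.symm⟩⟩ Finset.univ (by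
      intro x _
      by_cases e1 : x = u
      · left; simp [e1]
      by_cases e2 : x = v
      · left; simp [e2]
      by_cases e3 : x = a
      · left; simp [e3]
      by_cases e4 : x = b
      · left; simp [e4]
      right
      rcases hx x e1 e2 with k | k
      · have := hnA x e2 ((k _).2 rfl).symm
        exact ⟨v, by simp, b, by simp, hvb.ne, this v huv.ne' (Ne.symm e2), this b hbu (Ne.symm e4)⟩
      · have := hnB x e1 ((k _).2 rfl).symm
        exact ⟨u, by simp, a, by simp, hua.ne, this u huv.ne (Ne.symm e1), this a hav (Ne.symm e3)⟩)
  rw [Finset.card_univ] at u2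
  omega


theorem pc_zero [Subsingleton V] : G.pc 2 = 0 := by
  apply Nat.sInf_eq_zero.2
  left
  refine ⟨fun _ => 0, ?_, fun u v h => absurd (Subsingleton.elim u v) h⟩
  intro e he
  induction e with
  | _ a b => exact absurd (Subsingleton.elim a b) ((SimpleGraph.mem_edgeSet _).1 he).ne

end part6

/-- If `G` and its complement are both connected graphs on `n` vertices, then
`pc_{1,2}(G) + pc_{1,2}(Ḡ) = n + 2` if and only if `G` or `Ḡ` is isomorphic to a
double star `T(n₁,n₂)` with `n₁, n₂ ≥ 1`. -/
theorem pc_add_pc_compl_eq_iff {V : Type*} [Fintype V] (G : SimpleGraph V)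
    (hG : G.Connected) (hGc : Gᶜ.Connected) :
    G.pc 2 + Gᶜ.pc 2 = Fintype.card V + 2 ↔
      ∃ n₁ n₂ : ℕ, 1 ≤ n₁ ∧ 1 ≤ n₂ ∧
        (Nonempty (G ≃g doubleStar n₁ n₂) ∨ Nonempty (Gᶜ ≃g doubleStar n₁ n₂)) := by
  constructor
  · intro hsum
    rcases subsingleton_or_nontrivial V with hs | hs
    · have h1 : G.pc 2 = 0 := pc_zero
      have h2 : Gᶜ.pc 2 = 0 := pc_zero
      omega
    by_cases h1 : ∀ l, GPath G l → l.length < 5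
    · obtain ⟨u, v, h⟩ := ds_of_no5 hG hGc (no5_of h1)
      obtain ⟨n₁, n₂, k1, k2, e⟩ := iso_of_ds h
      exact ⟨n₁, n₂, k1, k2, Or.inl e⟩
    by_cases h2 : ∀ l, GPath Gᶜ l → l.length < 5
    · obtain ⟨u, v, h⟩ := ds_of_no5 hGc (by rwa [compl_compl]) (no5_of h2)
      obtain ⟨n₁, n₂, k1, k2, e⟩ := iso_of_ds h
      exact ⟨n₁, n₂, k1, k2, Or.inr e⟩
    push Not at h1 h2
    obtain ⟨l0, h0, h05⟩ := h1
    obtain ⟨l1, h1, h15⟩ := h2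
    have := sum_le hG hGc l0 h0 h05 l1 h1 h15
    omega
  · rintro ⟨n₁, n₂, k1, k2, ⟨⟨e⟩⟩ | ⟨⟨e⟩⟩⟩
    · obtain ⟨u, v, h⟩ := ds_of_iso k1 k2 e
      exact ds_sum hG hGc h
    · obtain ⟨u, v, h⟩ := ds_of_iso k1 k2 e
      have := ds_sum hGc (by rwa [compl_compl]) h
      rw [compl_compl] at this
      omega
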